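/- Let (A, ·, α) be a Hom-Malcev algebra and define G(w,x,y,z) = J_α(w·x, α(y), α(z)) - α²(x)·J_α(w,y,z) - J_α(x,y,z)·α²(w). Then G is skew-symmetric (alternating) in its four variables; in particular G changes sign under any transposition of adjacent arguments and vanishes whenever two arguments are equal. -/

import Mathlib

/-- The Hom-Jacobian of a Hom-algebra with bilinear multiplication `mul` and
twisting map `α`: `J_α(x,y,z) = (x·y)·α(z) + (y·z)·α(x) + (z·x)·α(y)`. -/
def homJacobian {K : Type*} [Field K] {A : Type*} [AddCommGroup A] [Module K A]
    (mul : A →ₗ[K] A →ₗ[K] A) (α : A →ₗ[K] A) (x y z : A) : A :=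
  mul (mul x y) (α z) + mul (mul y z) (α x) + mul (mul z x) (α y)

/-!
For an alternating product, every vanishing and sign rule for the Hom-Kleinfeld function other than
those mixing the first two arguments with the last two is formal. The Hom-Malcev identity,
rotated, says exactly that the function vanishes when its first and third arguments agree, and this
one mixed rule, polarized, yields the remaining transposition.
-/

section HomMalcev

variable {K : Type*} [Field K] {A : Type*} [AddCommGroup A] [Module K A]
  {mul : A →ₗ[K] A →ₗ[K] A} {α : A →ₗ[K] A}

theorem homJacobian_rotate (x y z : A) :
    homJacobian mul α x y z = homJacobian mul α y z x := by
  simp only [homJacobian]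
  abel

theorem homJacobian_self_right (hmul : mul.IsAlt) (x y : A) : homJacobian mul α x y y = 0 := by
  simp only [homJacobian, hmul.self_eq_zero, ← hmul.neg x y, map_neg, map_zero,
    LinearMap.neg_apply, LinearMap.zero_apply]
  abel

theorem homJacobian_swap_right (hmul : mul.IsAlt) (x y z : A) :
    homJacobian mul α x z y = -homJacobian mul α x y z := by
  simp only [homJacobian, ← hmul.neg x y, ← hmul.neg y z, ← hmul.neg z x, map_neg,
    LinearMap.neg_apply]
  abel

theorem homJacobian_neg_left (x y z : A) :
    homJacobian mul α (-x) y z = -homJacobian mul α x y z := by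
  simp only [homJacobian, map_neg, LinearMap.neg_apply]
  abel

theorem homJacobian_zero_left (y z : A) : homJacobian mul α 0 y z = 0 := by
  simp only [homJacobian, map_zero, LinearMap.zero_apply, add_zero]

variable (mul α) in
/-- The Hom-Malcev identity `J_α(α(x), α(y), x·z) = J_α(x,y,z)·α²(x)`, as a condition on an
arbitrary bilinear product and twisting map. -/
def HomMalcevIdentity : Prop :=
  ∀ x y z : A, homJacobian mul α (α x) (α y) (mul x z)
    = mul (homJacobian mul α x y z) (α (α x))

variable (mul α) in
/-- The Hom-analogue of the Kleinfeld function
`J(w·x, y, z) - x·J(w, y, z) - J(x, y, z)·w` of a Malcev algebra, which is the case `α = id`. It is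
the function `G` of `homMalcev_G_alternating`. -/
def homKleinfeld (w x y z : A) : A :=
  homJacobian mul α (mul w x) (α y) (α z)
    - mul (α (α x)) (homJacobian mul α w y z)
    - mul (homJacobian mul α x y z) (α (α w))

theorem homKleinfeld_add₂ (w x x' y z : A) :
    homKleinfeld mul α w (x + x') y z
      = homKleinfeld mul α w x y z + homKleinfeld mul α w x' y z := by
  simp only [homKleinfeld, homJacobian, map_add, LinearMap.add_apply]
  abel

theorem homKleinfeld_add₃ (w x y y' z : A) :
    homKleinfeld mul α w x (y + y') z
      = homKleinfeld mul α w x y z + homKleinfeld mul α w x y' z := by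
  simp only [homKleinfeld, homJacobian, map_add, LinearMap.add_apply]
  abel

theorem homKleinfeld_swap₁₂ (hmul : mul.IsAlt) (w x y z : A) :
    homKleinfeld mul α x w y z = -homKleinfeld mul α w x y z := by
  simp only [homKleinfeld]
  rw [← hmul.neg w x, homJacobian_neg_left, ← hmul.neg _ (α (α w)), ← hmul.neg _ (α (α x))]
  abel

theorem homKleinfeld_swap₃₄ (hmul : mul.IsAlt) (w x y z : A) :
    homKleinfeld mul α w x z y = -homKleinfeld mul α w x y z := by
  simp only [homKleinfeld, homJacobian_swap_right hmul _ y z,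
    homJacobian_swap_right hmul _ (α y) (α z), map_neg, LinearMap.neg_apply]
  abel

theorem homKleinfeld_self₁₂ (hmul : mul.IsAlt) (x y z : A) :
    homKleinfeld mul α x x y z = 0 := by
  rw [homKleinfeld, hmul.self_eq_zero, homJacobian_zero_left, ← hmul.neg _ (α (α x))]
  abel

theorem homKleinfeld_self₃₄ (hmul : mul.IsAlt) (w x y : A) :
    homKleinfeld mul α w x y y = 0 := by
  simp only [homKleinfeld, homJacobian_self_right hmul, map_zero, LinearMap.zero_apply, sub_zero]

theorem homKleinfeld_self₁₃ (hmul : mul.IsAlt) (malcev : HomMalcevIdentity mul α) (x y z : A) :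
    homKleinfeld mul α x y x z = 0 := by
  have jacobian_mul : homJacobian mul α (mul x y) (α x) (α z)
      = mul (homJacobian mul α y x z) (α (α x)) := by
    rw [homJacobian_rotate, malcev, ← homJacobian_rotate]
  have jacobian_self : homJacobian mul α x x z = 0 := by
    rw [← homJacobian_rotate, homJacobian_self_right hmul]
  rw [homKleinfeld, jacobian_mul, jacobian_self, map_zero, sub_zero, sub_self]

theorem homKleinfeld_self₂₃ (hmul : mul.IsAlt) (malcev : HomMalcevIdentity mul α) (w x z : A) :
    homKleinfeld mul α w x x z = 0 := by
  rw [homKleinfeld_swap₁₂ hmul, homKleinfeld_self₁₃ hmul malcev, neg_zero]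

theorem homKleinfeld_self₁₄ (hmul : mul.IsAlt) (malcev : HomMalcevIdentity mul α) (x y z : A) :
    homKleinfeld mul α x y z x = 0 := by
  rw [homKleinfeld_swap₃₄ hmul, homKleinfeld_self₁₃ hmul malcev, neg_zero]

theorem homKleinfeld_self₂₄ (hmul : mul.IsAlt) (malcev : HomMalcevIdentity mul α) (w x y : A) :
    homKleinfeld mul α w x y x = 0 := by
  rw [homKleinfeld_swap₃₄ hmul, homKleinfeld_self₂₃ hmul malcev, neg_zero]

theorem homKleinfeld_swap₂₃ (hmul : mul.IsAlt) (malcev : HomMalcevIdentity mul α) (w x y z : A) :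
    homKleinfeld mul α w y x z = -homKleinfeld mul α w x y z := by
  have polarized := homKleinfeld_self₂₃ hmul malcev w (x + y) z
  rw [homKleinfeld_add₂, homKleinfeld_add₃, homKleinfeld_add₃, homKleinfeld_self₂₃ hmul malcev,
    homKleinfeld_self₂₃ hmul malcev, zero_add, add_zero] at polarized
  exact eq_neg_of_add_eq_zero_right polarized

theorem homMalcev_G_alternating_general (hmul : mul.IsAlt) (malcev : HomMalcevIdentity mul α) :
    (∀ w x y z : A, homKleinfeld mul α x w y z = -homKleinfeld mul α w x y z) ∧
    (∀ w x y z : A, homKleinfeld mul α w y x z = -homKleinfeld mul α w x y z) ∧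
    (∀ w x y z : A, homKleinfeld mul α w x z y = -homKleinfeld mul α w x y z) ∧
    (∀ x y z : A, homKleinfeld mul α x x y z = 0) ∧
    (∀ x y z : A, homKleinfeld mul α x y x z = 0) ∧
    (∀ x y z : A, homKleinfeld mul α x y z x = 0) ∧
    (∀ x y z : A, homKleinfeld mul α y x x z = 0) ∧
    (∀ x y z : A, homKleinfeld mul α y x z x = 0) ∧
    (∀ x y z : A, homKleinfeld mul α y z x x = 0) :=
  ⟨homKleinfeld_swap₁₂ hmul, homKleinfeld_swap₂₃ hmul malcev, homKleinfeld_swap₃₄ hmul,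
    homKleinfeld_self₁₂ hmul, homKleinfeld_self₁₃ hmul malcev, homKleinfeld_self₁₄ hmul malcev,
    fun x y z ↦ homKleinfeld_self₂₃ hmul malcev y x z,
    fun x y z ↦ homKleinfeld_self₂₄ hmul malcev y x z,
    fun x y z ↦ homKleinfeld_self₃₄ hmul y z x⟩

end HomMalcev

theorem homMalcev_G_alternating {K : Type*} [Field K] [CharZero K] {A : Type*} [AddCommGroup A] [Module K A]
    (mul : A →ₗ[K] A →ₗ[K] A) (α : A →ₗ[K] A)
    (anticomm : ∀ x y : A, mul x y = - mul y x)
    (multiplicative : ∀ x y : A, α (mul x y) = mul (α x) (α y))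
    (malcev : ∀ x y z : A,
      homJacobian mul α (α x) (α y) (mul x z)
        = mul (homJacobian mul α x y z) (α (α x)))
    (G : A → A → A → A → A)
    (hG : ∀ w x y z : A,
      G w x y z = homJacobian mul α (mul w x) (α y) (α z)
          - mul (α (α x)) (homJacobian mul α w y z)
          - mul (homJacobian mul α x y z) (α (α w))) :
    (∀ w x y z : A, G x w y z = - G w x y z) ∧
    (∀ w x y z : A, G w y x z = - G w x y z) ∧
    (∀ w x y z : A, G w x z y = - G w x y z) ∧
    (∀ x y z : A, G x x y z = 0) ∧
    (∀ x y z : A, G x y x z = 0) ∧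
    (∀ x y z : A, G x y z x = 0) ∧
    (∀ x y z : A, G y x x z = 0) ∧
    (∀ x y z : A, G y x z x = 0) ∧
    (∀ x y z : A, G y z x x = 0) := by
  obtain rfl : G = homKleinfeld mul α := by ext w x y z; exact hG w x y z
  have : IsAddTorsionFree A := .of_isTorsionFree K A
  exact homMalcev_G_alternating_general (fun x ↦ self_eq_neg.mp (anticomm x x)) malcev
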